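/- Let a ∈ [0,1]. There exists a constant c > 0, depending only on a, such that for all ξ₁, ξ₂ ∈ ℝ with |ξ₁|/4 ≤ |ξ₂| ≤ |ξ₁|: if ξ₁ξ₂ ≥ 0 then |ω(ξ₁) + ω(ξ₂) − ω(ξ₁+ξ₂)| ≥ c |ξ₁|^{2+a}, and if ξ₁ξ₂ ≤ 0 then |ω(ξ₁) + ω(ξ₂) − ω(ξ₁+ξ₂)| ≥ c |ξ₁|^{1+a} |ξ₁+ξ₂|. -/

import Mathlib

/-!
The symbol `ω = disp a` is odd, and for `x, y ≥ 0` superadditivity of `t ↦ t ^ (1 + a)` gives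
`ω(x + y) - ω(x) - ω(y) ≥ y x ^ (1 + a)` (`disp_gap`). After reducing to `ξ₁ ≥ 0` by oddness,
this is applied to the pair `(ξ₁, ξ₂)` when the signs agree, and to `(-ξ₂, ξ₁ + ξ₂)`, whose sum is
`ξ₁`, when they differ. Since `|ξ₂| ≥ |ξ₁| / 4` and `1 + a ≤ 2`, the constant `1 / 16` works.
-/

open MeasureTheory Complex

noncomputable section

/-- The dispersive symbol `ω(ξ) = ξ |ξ|^(1+a)`. -/
def disp (a ξ : ℝ) : ℝ := ξ * |ξ| ^ (1 + a)

/-- Fourier transform on `ℝ`, convention `f̂(ξ) = ∫ e^{ixξ} f(x) dx`. -/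
def FT1 (f : ℝ → ℂ) (ξ : ℝ) : ℂ :=
  ∫ x : ℝ, Complex.exp (Complex.I * ((x * ξ : ℝ) : ℂ)) * f x

/-- Spacetime Fourier transform, convention `f̂(ξ,λ) = ∫ e^{i(xξ+tλ)} f(x,t) dx dt`,
for `f : ℝ × ℝ → ℂ` with first coordinate `x` (space) and second `t` (time). -/
def FT2 (f : ℝ × ℝ → ℂ) (ξ lam : ℝ) : ℂ :=
  ∫ p : ℝ × ℝ, Complex.exp (Complex.I * ((p.1 * ξ + p.2 * lam : ℝ) : ℂ)) * f p

/-- The dyadic cutoffs `χ_j`: `χ_0 = χ₀` and `χ_j(z) = χ(2^{-j} z)` for `j ≥ 1`. -/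
def chiJ (χ₀ χ : ℝ → ℝ) (j : ℕ) (z : ℝ) : ℝ :=
  if j = 0 then χ₀ z else χ ((2 : ℝ) ^ (-(j : ℝ)) * z)

/-- Hypotheses on the fixed dyadic cutoffs. -/
structure DyadicCutoffs (χ₀ χ : ℝ → ℝ) : Prop where
  smooth0 : ContDiff ℝ (⊤ : ℕ∞) χ₀
  even0 : ∀ z, χ₀ (-z) = χ₀ z
  mem0 : ∀ z, χ₀ z ∈ Set.Icc (0 : ℝ) 1
  supp0 : ∀ z, 2 < |z| → χ₀ z = 0
  one0 : ∀ z, |z| ≤ 1 → χ₀ z = 1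
  smooth1 : ContDiff ℝ (⊤ : ℕ∞) χ
  even1 : ∀ z, χ (-z) = χ z
  mem1 : ∀ z, χ z ∈ Set.Icc (0 : ℝ) 1
  supp1 : ∀ z, χ z ≠ 0 → 1 / 2 < |z| ∧ |z| < 2
  partition : ∀ z, ∑' j : ℕ, chiJ χ₀ χ j z = 1

/-- A smooth time cutoff supported in `[-1,1]`. -/
structure TimeCutoff (ψ : ℝ → ℝ) : Prop where
  smooth : ContDiff ℝ (⊤ : ℕ∞) ψ
  supp : ∀ t, ψ t ≠ 0 → |t| ≤ 1

/-- The norm `‖f‖_{X^b_s}`. -/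
def Xnorm (a : ℝ) (χ₀ χ : ℝ → ℝ) (b s : ℝ) (f : ℝ × ℝ → ℂ) : ℝ :=
  ∑' j : ℕ, (2 : ℝ) ^ ((j : ℝ) * b) *
    (∫ p : ℝ × ℝ, chiJ χ₀ χ j (p.2 - disp a p.1) * (1 + |p.1|) ^ (2 * s) *
      ‖FT2 f p.1 p.2‖ ^ 2) ^ ((1 : ℝ) / 2)

/-- The norm `‖f‖_{Y^b_{s₀,s₁}} = ‖x·f‖_{X^b_{s₀}} + ‖t·f‖_{X^b_{s₁}}`. -/
def Ynorm (a : ℝ) (χ₀ χ : ℝ → ℝ) (b s₀ s₁ : ℝ) (f : ℝ × ℝ → ℂ) : ℝ :=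
  Xnorm a χ₀ χ b s₀ (fun p => (p.1 : ℂ) * f p) +
    Xnorm a χ₀ χ b s₁ (fun p => (p.2 : ℂ) * f p)

/-- The norm `‖f‖_{Z^b_s} = ‖f‖_{X^b_s} + ‖f‖_{Y^b_{s-2s*,s}}`, where `s* = 1/2 + a/2`. -/
def Znorm (a : ℝ) (χ₀ χ : ℝ → ℝ) (b s : ℝ) (f : ℝ × ℝ → ℂ) : ℝ :=
  Xnorm a χ₀ χ b s f + Ynorm a χ₀ χ b (s - 2 * (1 / 2 + a / 2)) s f

/-- The norm `‖f‖_{X̃^b_s}`. -/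
def XtildeNorm (a b s : ℝ) (f : ℝ × ℝ → ℂ) : ℝ :=
  (∫ p : ℝ × ℝ, (1 + |p.2 - disp a p.1|) ^ (2 * b) * (1 + |p.1|) ^ (2 * s) *
    ‖FT2 f p.1 p.2‖ ^ 2) ^ ((1 : ℝ) / 2)

/-- The Sobolev norm `‖g‖_{H^s} = (∫ (1+|ξ|)^{2s} |ĝ(ξ)|² dξ)^{1/2}`. -/
def Hnorm (s : ℝ) (g : ℝ → ℂ) : ℝ :=
  (∫ ξ : ℝ, (1 + |ξ|) ^ (2 * s) * ‖FT1 g ξ‖ ^ 2) ^ ((1 : ℝ) / 2)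

/-- The weighted norm `‖g‖_{F^s} = ‖g‖_{H^s} + ‖x·g‖_{H^{s-2s*}}` (here `sstar = s*`). -/
def Fnorm (sstar s : ℝ) (g : ℝ → ℂ) : ℝ :=
  Hnorm s g + Hnorm (s - 2 * sstar) (fun x => (x : ℂ) * g x)

/-- The `L^p` norm `(∫ ‖f‖^p)^{1/p}`. -/
def Lpnorm {α : Type*} [MeasureSpace α] {E : Type*} [NormedAddCommGroup E]
    (p : ℝ) (f : α → E) : ℝ :=
  (∫ x, ‖f x‖ ^ p) ^ (1 / p)

/-- The linear propagator `W(t)`, defined via Fourier inversion so that its Fourier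
transform in `x` is `e^{itω(ξ)} û₀(ξ)`. -/
def Wgrp (a : ℝ) (u₀ : ℝ → ℂ) (t x : ℝ) : ℂ :=
  ((1 / (2 * Real.pi) : ℝ) : ℂ) *
    ∫ ξ : ℝ, Complex.exp (-(Complex.I * ((x * ξ : ℝ) : ℂ))) *
      (Complex.exp (Complex.I * ((t * disp a ξ : ℝ) : ℂ)) * FT1 u₀ ξ)

/-- The Fourier multiplier `D^σ` with symbol `|ξ|^σ`, via Fourier inversion. -/
def Dop (σ : ℝ) (g : ℝ → ℂ) (x : ℝ) : ℂ :=
  ((1 / (2 * Real.pi) : ℝ) : ℂ) *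
    ∫ ξ : ℝ, Complex.exp (-(Complex.I * ((x * ξ : ℝ) : ℂ))) *
      (((|ξ| ^ σ : ℝ) : ℂ) * FT1 g ξ)

lemma disp_neg (a x : ℝ) : disp a (-x) = -disp a x := by
  simp [disp]

lemma disp_gap {a x y : ℝ} (ha : 0 ≤ a) (hx : 0 ≤ x) (hy : 0 ≤ y) :
    y * x ^ (1 + a) ≤ disp a (x + y) - disp a x - disp a y := by
  have h := Real.add_rpow_le_rpow_add hx hy (by linarith : (1 : ℝ) ≤ 1 + a)
  have hxp : 0 ≤ x ^ (1 + a) := Real.rpow_nonneg hx _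
  have hyp : 0 ≤ y ^ (1 + a) := Real.rpow_nonneg hy _
  simp only [disp, abs_of_nonneg hx, abs_of_nonneg hy, abs_of_nonneg (add_nonneg hx hy)]
  nlinarith [mul_le_mul_of_nonneg_left h (add_nonneg hx hy), mul_nonneg hx hyp]

/-- The two bounds when the larger frequency is nonnegative. -/
lemma resonance_of_nonneg {a x y : ℝ} (ha0 : 0 ≤ a) (ha1 : a ≤ 1) (hx : 0 ≤ x)
    (h1 : x / 4 ≤ |y|) (h2 : |y| ≤ x) :
    (x * y ≥ 0 → |disp a x + disp a y - disp a (x + y)| ≥ 1 / 16 * x ^ (2 + a)) ∧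
    (x * y ≤ 0 → |disp a x + disp a y - disp a (x + y)| ≥
      1 / 16 * x ^ (1 + a) * |x + y|) := by
  have hxp : 0 ≤ x ^ (1 + a) := Real.rpow_nonneg hx _
  constructor
  · intro h
    have hy : 0 ≤ y := by
      by_contra! hy
      rw [abs_of_neg hy] at h2
      nlinarith
    rw [abs_of_nonneg hy] at h1
    have hpow : x ^ (2 + a) = x * x ^ (1 + a) := by
      rw [show 2 + a = 1 + (1 + a) by ring, Real.rpow_add' hx (by linarith), Real.rpow_one]
    have hg := disp_gap ha0 hx hy
    rw [hpow, abs_sub_comm]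
    refine le_trans ?_ (le_abs_self _)
    nlinarith [mul_le_mul_of_nonneg_right h1 hxp, mul_nonneg hx hxp]
  · intro h
    have hy : y ≤ 0 := by
      by_contra! hy
      rw [abs_of_pos hy] at h2
      nlinarith
    rw [abs_of_nonpos hy] at h1 h2
    have hz : 0 ≤ x + y := by linarith
    have hg := disp_gap ha0 (neg_nonneg.2 hy) hz
    rw [show -y + (x + y) = x by ring, disp_neg] at hg
    have hpow : 1 / 16 * x ^ (1 + a) ≤ (-y) ^ (1 + a) := by
      have hle : (x / 4) ^ (1 + a) ≤ (-y) ^ (1 + a) :=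
        Real.rpow_le_rpow (by positivity) h1 (by linarith)
      have h4 : (4 : ℝ) ^ (1 + a) ≤ 16 := by
        calc (4 : ℝ) ^ (1 + a) ≤ 4 ^ (2 : ℝ) :=
              Real.rpow_le_rpow_of_exponent_le (by norm_num) (by linarith)
          _ = 16 := by norm_num
      rw [Real.div_rpow hx (by norm_num)] at hle
      refine le_trans ?_ hle
      rw [one_div_mul_eq_div]
      exact div_le_div_of_nonneg_left hxp (by positivity) h4
    rw [abs_of_nonneg hz]
    refine le_trans ?_ (le_abs_self _)
    nlinarith [mul_le_mul_of_nonneg_right hpow hz]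

theorem statement10 (a : ℝ) (ha : a ∈ Set.Icc (0 : ℝ) 1) :
    ∃ c > 0, ∀ ξ₁ ξ₂ : ℝ, |ξ₁| / 4 ≤ |ξ₂| → |ξ₂| ≤ |ξ₁| →
      (ξ₁ * ξ₂ ≥ 0 →
        |disp a ξ₁ + disp a ξ₂ - disp a (ξ₁ + ξ₂)| ≥ c * |ξ₁| ^ (2 + a)) ∧
      (ξ₁ * ξ₂ ≤ 0 →
        |disp a ξ₁ + disp a ξ₂ - disp a (ξ₁ + ξ₂)| ≥ c * |ξ₁| ^ (1 + a) * |ξ₁ + ξ₂|) := by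
  obtain ⟨ha0, ha1⟩ := ha
  refine ⟨1 / 16, by norm_num, fun ξ₁ ξ₂ h1 h2 => ?_⟩
  rcases le_total 0 ξ₁ with h | h
  · rw [abs_of_nonneg h] at *
    exact resonance_of_nonneg ha0 ha1 h h1 h2
  · rw [abs_of_nonpos h] at *
    rw [← abs_neg ξ₂] at h1 h2
    have key := resonance_of_nonneg ha0 ha1 (neg_nonneg.2 h) h1 h2
    have e : disp a (-ξ₁) + disp a (-ξ₂) - disp a (-ξ₁ + -ξ₂) =
        -(disp a ξ₁ + disp a ξ₂ - disp a (ξ₁ + ξ₂)) := by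
      rw [← neg_add, disp_neg, disp_neg, disp_neg]
      ring
    rw [e, abs_neg, neg_mul_neg, ← neg_add, abs_neg] at key
    exact key
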